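/- arXiv:2509.22840 — 3 statements merged into one kernel-verified Lean document; each statement's English description precedes it below -/
import Mathlib

section
/- Let G = (V, E) be a directed graph on m vertices with m' edges (no parallel edges), and let Δ be the maximum of the maximum out-degree and the maximum in-degree of G. Then for every positive integer d, the edge set E can be partitioned into H = ⌈m'/d⌉ + Δ (possibly empty) sets M_1,…,M_H such that each M_k is a matching — no two edges of M_k share a source vertex and no two share a target vertex — and |M_k| ≤ d for every k. -/
/-- Maximum of the maximum out-degree and the maximum in-degree of a directed graph
given by its edge set `E`. -/
def maxDeg {m : ℕ} (E : Finset (Fin m × Fin m)) : ℕ :=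
  (Finset.univ.sup fun v : Fin m => (E.filter fun e => e.1 = v).card) ⊔
  (Finset.univ.sup fun v : Fin m => (E.filter fun e => e.2 = v).card)

theorem aux_perm {V : Type} [Fintype V] [DecidableEq V] (D : ℕ) :
    ∀ B : V → V → ℕ, (∀ i, ∑ j, B i j = D) → (∀ j, ∑ i, B i j = D) →
      ∃ σ : ℕ → Equiv.Perm V, ∀ i j, 0 < B i j → ∃ k < D, σ k i = j := by
  induction D with
  | zero =>
    intro B hr hc
    refine ⟨fun _ => 1, fun i j h => ?_⟩
    have := hr i
    rw [Finset.sum_eq_zero_iff] at this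
    have := this j (Finset.mem_univ _)
    omega
  | succ D ih =>
    intro B hr hc
    obtain ⟨f, hf, hft⟩ := (Finset.all_card_le_biUnion_card_iff_exists_injective
      (fun i => Finset.univ.filter fun j => 0 < B i j)).1 (by
        intro s
        set N := s.biUnion (fun i => Finset.univ.filter fun j => 0 < B i j) with hN
        have h1 : ∑ i ∈ s, ∑ j, B i j = s.card * (D + 1) := by
          simp [hr]
        have h2 : ∑ j ∈ N, ∑ i, B i j = N.card * (D + 1) := by
          simp [hc]
        have h3 : ∑ i ∈ s, ∑ j, B i j = ∑ i ∈ s, ∑ j ∈ N, B i j := by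
          refine Finset.sum_congr rfl fun i hi => ?_
          symm
          refine Finset.sum_subset (Finset.subset_univ _) fun j _ hj => ?_
          by_contra hne
          exact hj (Finset.mem_biUnion.2 ⟨i, hi, by simp; omega⟩)
        have h4 : ∑ j ∈ N, ∑ i ∈ s, B i j ≤ ∑ j ∈ N, ∑ i, B i j :=
          Finset.sum_le_sum fun j _ =>
            Finset.sum_le_sum_of_subset (Finset.subset_univ s)
        rw [Finset.sum_comm, ← h3, h1, h2] at h4
        exact Nat.le_of_mul_le_mul_right h4 (Nat.succ_pos D))
    let τ : Equiv.Perm V := Equiv.ofBijective f (Finite.injective_iff_bijective.1 hf)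
    have hτ : ∀ i, 0 < B i (τ i) := fun i => (Finset.mem_filter.1 (hft i)).2
    have key : ∀ i j, (B i j - if τ i = j then 1 else 0) + (if τ i = j then 1 else 0) = B i j := by
      intro i j
      split_ifs with h
      · have := hτ i
        rw [h] at this
        omega
      · omega
    obtain ⟨σ, hσ⟩ := ih (fun i j => B i j - if τ i = j then 1 else 0)
      (by
        intro i
        have h := hr i
        rw [← Finset.sum_congr rfl (fun j _ => key i j), Finset.sum_add_distrib] at h
        simpa using h)
      (by
        intro j
        have h := hc j
        rw [← Finset.sum_congr rfl (fun i _ => key i j), Finset.sum_add_distrib] at h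
        have h1 : ∑ i, (if τ i = j then 1 else 0) = 1 := by
          simp only [← Equiv.eq_symm_apply]
          simp
        rw [h1] at h
        exact Nat.succ_injective h)
    refine ⟨Function.update σ D τ, fun i j hij => ?_⟩
    by_cases h : τ i = j
    · exact ⟨D, by omega, by simpa using h⟩
    · obtain ⟨k, hk, hk'⟩ := hσ i j (by simpa [h] using hij)
      exact ⟨k, by omega, by rw [Function.update_of_ne (by omega)]; exact hk'⟩

theorem aux_color {m : ℕ} (E : Finset (Fin m × Fin m)) :
    ∃ c : Fin m × Fin m → ℕ, (∀ e ∈ E, c e < maxDeg E) ∧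
      ∀ e ∈ E, ∀ e' ∈ E, c e = c e' → e ≠ e' → e.1 ≠ e'.1 ∧ e.2 ≠ e'.2 := by
  classical
  let A : Fin m → Fin m → ℕ := fun i j => if (i, j) ∈ E then 1 else 0
  have hr : ∀ i, ∑ j, A i j ≤ maxDeg E := by
    intro i
    have h1 : (E.filter fun e => e.1 = i).card ≤ maxDeg E :=
      le_trans (Finset.le_sup (f := fun v : Fin m => (E.filter fun e => e.1 = v).card)
        (Finset.mem_univ i)) le_sup_left
    refine le_trans ?_ h1
    simp only [A, Finset.sum_boole, Nat.cast_id]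
    refine Finset.card_le_card_of_injOn (fun j => (i, j)) ?_ ?_
    · intro j hj
      simpa using hj
    · intro a _ b _ h
      simpa using h
  have hc : ∀ j, ∑ i, A i j ≤ maxDeg E := by
    intro j
    have h1 : (E.filter fun e => e.2 = j).card ≤ maxDeg E :=
      le_trans (Finset.le_sup (f := fun v : Fin m => (E.filter fun e => e.2 = v).card)
        (Finset.mem_univ j)) le_sup_right
    refine le_trans ?_ h1
    simp only [A, Finset.sum_boole, Nat.cast_id]
    refine Finset.card_le_card_of_injOn (fun i => (i, j)) ?_ ?_
    · intro j hj
      simpa using hj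
    · intro a _ b _ h
      simpa using h
  let B : Fin m ⊕ Fin m → Fin m ⊕ Fin m → ℕ := fun x y =>
    match x, y with
    | .inl i, .inl j => A i j
    | .inl i, .inr j => if i = j then maxDeg E - ∑ k, A i k else 0
    | .inr i, .inl j => if i = j then maxDeg E - ∑ k, A k j else 0
    | .inr i, .inr j => A j i
  obtain ⟨σ, hσ⟩ := aux_perm (maxDeg E) B
    (by
      rintro (i | i)
      · have := hr i
        simp [B, Fintype.sum_sum_type]
        omega
      · have := hc i
        simp [B, Fintype.sum_sum_type]
        omega)
    (by
      rintro (i | i)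
      · have := hc i
        simp [B, Fintype.sum_sum_type]
        omega
      · have := hr i
        simp [B, Fintype.sum_sum_type]
        omega)
  have h : ∀ e : Fin m × Fin m, ∃ k, e ∈ E → k < maxDeg E ∧ σ k (.inl e.1) = .inl e.2 := by
    intro e
    by_cases he : e ∈ E
    · obtain ⟨k, hk, hk'⟩ := hσ (.inl e.1) (.inl e.2) (by simp [B, A, he])
      exact ⟨k, fun _ => ⟨hk, hk'⟩⟩
    · exact ⟨0, fun h => absurd h he⟩
  choose c hcc using h
  refine ⟨c, fun e he => (hcc e he).1, fun e he e' he' hee hne => ?_⟩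
  have h1 := (hcc e he).2
  have h2 := (hcc e' he').2
  rw [← hee] at h2
  constructor
  · intro h
    rw [h, h2] at h1
    exact hne (Prod.ext h (Sum.inl_injective h1).symm)
  · intro h
    rw [h, ← h2] at h1
    exact hne (Prod.ext (Sum.inl_injective ((σ _).injective h1)) h)

theorem aux_rank {α : Type} (s : Finset α) :
    ∃ r : α → ℕ, (∀ a ∈ s, r a < s.card) ∧ Set.InjOn r s := by
  classical
  refine ⟨fun a => if h : a ∈ s then (s.equivFin ⟨a, h⟩ : ℕ) else 0, ?_, ?_⟩
  · intro a ha
    simp [ha]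
  · intro a ha b hb h
    have ha' : a ∈ s := ha
    have hb' : b ∈ s := hb
    simp only [ha', hb', dif_pos] at h
    have := s.equivFin.injective (Fin.ext h)
    simpa using this

/-- **Coloring-and-batching decomposition.**
Any directed graph on `m` vertices with `m' = |E|` edges and degree bound `Δ = maxDeg E`
admits, for every positive integer `d`, a partition of `E` into `H = ⌈m'/d⌉ + Δ`
(possibly empty) matchings `M_1,…,M_H`, each of size at most `d`: no two edges of the
same `M_k` share a source and no two share a target. -/
theorem stmt_8 {m : ℕ} (E : Finset (Fin m × Fin m)) (d : ℕ) (hd : 0 < d) :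
    ∃ M : Fin ((E.card + d - 1) / d + maxDeg E) → Finset (Fin m × Fin m),
      (∀ e, e ∈ E ↔ ∃ k, e ∈ M k) ∧
      (∀ k l, k ≠ l → Disjoint (M k) (M l)) ∧
      (∀ k, ∀ e ∈ M k, ∀ e' ∈ M k, e ≠ e' → e.1 ≠ e'.1 ∧ e.2 ≠ e'.2) ∧
      (∀ k, (M k).card ≤ d) := by
  classical
  obtain ⟨c, hc, hm⟩ := aux_color E
  choose r hr hinj using fun k : ℕ => aux_rank (E.filter fun e => c e = k)
  let K : Finset (Σ _ : ℕ, ℕ) := (Finset.range (maxDeg E)).sigma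
    fun k => Finset.range ((E.filter fun e => c e = k).card / d + 1)
  let key : Fin m × Fin m → Σ _ : ℕ, ℕ := fun e => ⟨c e, r (c e) e / d⟩
  have hkey : ∀ e ∈ E, key e ∈ K := by
    intro e he
    simp only [K, key, Finset.mem_sigma, Finset.mem_range]
    refine ⟨hc e he, Nat.lt_succ_of_le (Nat.div_le_div_right (hr (c e) e ?_).le)⟩
    simp [he]
  have hsum : ∑ k ∈ Finset.range (maxDeg E), (E.filter fun e => c e = k).card = E.card :=
    (Finset.card_eq_sum_card_fiberwise fun e he => by simpa using hc e he).symm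
  have hK : K.card ≤ (E.card + d - 1) / d + maxDeg E := by
    have h1 : K.card = ∑ k ∈ Finset.range (maxDeg E),
        (E.filter fun e => c e = k).card / d + maxDeg E := by
      simp [K, Finset.card_sigma, Finset.sum_add_distrib]
    have h2 : ∑ k ∈ Finset.range (maxDeg E), (E.filter fun e => c e = k).card / d
        ≤ E.card / d := by
      rw [Nat.le_div_iff_mul_le hd, Finset.sum_mul, ← hsum]
      exact Finset.sum_le_sum fun k _ => Nat.div_mul_le_self _ _
    have h3 : E.card / d ≤ (E.card + d - 1) / d := Nat.div_le_div_right (by omega)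
    omega
  obtain ⟨g, hg, hgi⟩ := aux_rank K
  have hsame : ∀ e ∈ E, ∀ e' ∈ E, g (key e) = g (key e') →
      c e = c e' ∧ r (c e) e / d = r (c e) e' / d := by
    intro e he e' he' h
    have h1 := hgi (hkey e he) (hkey e' he') h
    simp only [key, Sigma.mk.injEq, heq_eq_eq] at h1
    refine ⟨h1.1, ?_⟩
    rw [h1.2, h1.1]
  refine ⟨fun k => E.filter fun e => g (key e) = k, ?_, ?_, ?_, ?_⟩
  · intro e
    constructor
    · intro he
      exact ⟨⟨g (key e), lt_of_lt_of_le (hg _ (hkey e he)) hK⟩, by simp [he]⟩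
    · rintro ⟨k, hk⟩
      exact (Finset.mem_filter.1 hk).1
  · intro k l hkl
    rw [Finset.disjoint_left]
    intro e h1 h2
    exact hkl (Fin.ext ((Finset.mem_filter.1 h1).2.symm.trans (Finset.mem_filter.1 h2).2))
  · intro k e he e' he' hne
    obtain ⟨he, h1⟩ := Finset.mem_filter.1 he
    obtain ⟨he', h2⟩ := Finset.mem_filter.1 he'
    exact hm e he e' he' (hsame e he e' he' (h1.trans h2.symm)).1 hne
  · intro k
    rcases Finset.eq_empty_or_nonempty (E.filter fun e => g (key e) = k) with h0 | ⟨a, ha⟩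
    · simp [h0]
    · obtain ⟨ha, h1⟩ := Finset.mem_filter.1 ha
      have hs : ∀ e ∈ E.filter (fun e => g (key e) = k), e ∈ E ∧
          c a = c e ∧ r (c a) a / d = r (c a) e / d := by
        intro e he
        obtain ⟨he, h2⟩ := Finset.mem_filter.1 he
        exact ⟨he, hsame a ha e he (h1.trans h2.symm)⟩
      have : (E.filter fun e => g (key e) = k).card ≤ (Finset.range d).card := by
        refine Finset.card_le_card_of_injOn (fun e => r (c a) e % d) ?_ ?_
        · intro e _
          simpa using Nat.mod_lt _ hd
        · intro e he e' he' h
          obtain ⟨x1, x2, x3⟩ := hs e he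
          obtain ⟨y1, y2, y3⟩ := hs e' he'
          refine hinj (c a) (by simp [x1, x2]) (by simp [y1, y2]) ?_
          have h : r (c a) e % d = r (c a) e' % d := h
          rw [← Nat.div_add_mod (r (c a) e) d, ← Nat.div_add_mod (r (c a) e') d, h, ← x3, ← y3]
      simpa using this
end

section
/- There is an absolute constant C' > 0 such that the following holds for all γ ∈ (0,1), integers m ≥ 2, d ≥ 1, h ≥ 1, widths d_1,…,d_h with D_K = Σ_k d_k, and any fixed embeddings x_1,…,x_m ∈ ℝ^d with ‖x_v‖₂ ≤ 1 for all v. The number of distinct edge sets E ⊆ {(u,v) : u, v ∈ {1,…,m}, u ≠ v} that are recoverable with margin γ — i.e., for which there exist block matrices U = [U_1|…|U_h], V = [V_1|…|V_h] with U_k, V_k ∈ ℝ^{d×d_k}, ‖U‖_F ≤ 1, ‖V‖_F ≤ 1, and τ ∈ [−1,1] such that max_k x_uᵀ U_k V_kᵀ x_v ≥ τ + γ for every (u,v) ∈ E and max_k x_uᵀ U_k V_kᵀ x_v ≤ τ − γ for every ordered pair (u,v) ∉ E with u ≠ v — is at most (C'/γ)^{2·d·D_K + 1}. -/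
open Matrix

/-- Squared Frobenius norm of a real matrix. -/
def frobSq {n m : ℕ} (A : Matrix (Fin n) (Fin m) ℝ) : ℝ := ∑ i, ∑ j, A i j ^ 2

/-- The edge set `E` is recovered with margin `γ` by the QK parameters `(U, V, τ)` over
the embeddings `x`: every edge has max-over-heads score `max_k x_uᵀ U_k V_kᵀ x_v ≥ τ + γ`
and every ordered loop-free non-edge has all head scores `≤ τ − γ`. -/
def Recovers {m d h : ℕ} {dk : Fin h → ℕ} (x : Fin m → Fin d → ℝ)
    (U V : ∀ k : Fin h, Matrix (Fin d) (Fin (dk k)) ℝ) (τ γ : ℝ)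
    (E : Finset (Fin m × Fin m)) : Prop :=
  (∀ e ∈ E, ∃ k, τ + γ ≤ Matrix.vecMul (x e.1) (U k) ⬝ᵥ Matrix.vecMul (x e.2) (V k)) ∧
  (∀ u v : Fin m, u ≠ v → (u, v) ∉ E →
    ∀ k, Matrix.vecMul (x u) (U k) ⬝ᵥ Matrix.vecMul (x v) (V k) ≤ τ - γ)

open MeasureTheory Metric in
theorem packing_aux {P : Type*} [NormedAddCommGroup P] [NormedSpace ℝ P]
    [FiniteDimensional ℝ P] {α : Type*} (S : Finset α) (f : α → P) (γ : ℝ) (h0 : 0 < γ)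
    (h1 : γ < 1) (hf : ∀ a ∈ S, ‖f a‖ ≤ 1)
    (hs : ∀ a ∈ S, ∀ b ∈ S, a ≠ b → 2 * γ / 3 ≤ dist (f a) (f b)) :
    (S.card : ℝ) ≤ (4 / γ) ^ Module.finrank ℝ P := by
  borelize P
  let μ : Measure P := Measure.addHaar
  have D : Set.Pairwise (S : Set α) (Function.onFun Disjoint (fun a => ball (f a) (γ/3))) := by
    intro a ha b hb hab
    apply ball_disjoint_ball
    have := hs a ha b hb hab
    linarith
  have A : (⋃ a ∈ S, ball (f a) (γ/3)) ⊆ ball (0 : P) (4/3) := by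
    refine Set.iUnion₂_subset fun a ha => ?_
    apply ball_subset_ball'
    rw [dist_zero_right]
    have := hf a ha
    linarith
  have I : (S.card : ENNReal) * ENNReal.ofReal ((γ/3) ^ Module.finrank ℝ P) * μ (ball 0 1) ≤
      ENNReal.ofReal ((4/3) ^ Module.finrank ℝ P) * μ (ball 0 1) :=
    calc
      _ = μ (⋃ a ∈ S, ball (f a) (γ/3)) := by
        rw [measure_biUnion_finset D fun a _ => measurableSet_ball]
        have : (0:ℝ) < γ/3 := by positivity
        simp only [μ.addHaar_ball_of_pos _ this, Finset.sum_const, nsmul_eq_mul, mul_assoc]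
      _ ≤ μ (ball (0 : P) (4/3)) := measure_mono A
      _ = _ := by
        rw [μ.addHaar_ball_of_pos _ (by norm_num : (0:ℝ) < 4/3)]
  have J : (S.card : ENNReal) * ENNReal.ofReal ((γ/3) ^ Module.finrank ℝ P) ≤
      ENNReal.ofReal ((4/3) ^ Module.finrank ℝ P) :=
    (ENNReal.mul_le_mul_iff_left (measure_ball_pos _ _ zero_lt_one).ne'
      measure_ball_lt_top.ne).1 I
  have K : (S.card : ℝ) * (γ/3) ^ Module.finrank ℝ P ≤ (4/3) ^ Module.finrank ℝ P := by
    rw [← ENNReal.ofReal_natCast, ← ENNReal.ofReal_mul (by positivity)] at J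
    exact (ENNReal.ofReal_le_ofReal_iff (by positivity)).1 J
  have : (4 / γ) = (4/3) / (γ/3) := by field_simp
  rw [this, div_pow, le_div_iff₀ (by positivity)]
  exact K

theorem vecMul_sq_aux {n m : ℕ} (x : Fin n → ℝ) (hx : Real.sqrt (∑ r, x r ^ 2) ≤ 1)
    (A : Matrix (Fin n) (Fin m) ℝ) : ∑ j, (Matrix.vecMul x A j) ^ 2 ≤ frobSq A := by
  have hx' : ∑ r, x r ^ 2 ≤ 1 := by
    have := (Real.sqrt_le_left (by norm_num : (0:ℝ) ≤ 1)).1 hx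
    simpa using this
  unfold frobSq
  rw [Finset.sum_comm]
  refine Finset.sum_le_sum fun j _ => ?_
  have := Finset.sum_mul_sq_le_sq_mul_sq Finset.univ x (fun i => A i j)
  have h2 : 0 ≤ ∑ i, A i j ^ 2 := Finset.sum_nonneg fun i _ => sq_nonneg _
  calc _ ≤ _ := this
    _ ≤ _ := mul_le_of_le_one_left h2 hx'

theorem score_aux {n m : ℕ} (x y : Fin n → ℝ) (hx : Real.sqrt (∑ r, x r ^ 2) ≤ 1)
    (hy : Real.sqrt (∑ r, y r ^ 2) ≤ 1)
    (A B : Matrix (Fin n) (Fin m) ℝ) :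
    |Matrix.vecMul x A ⬝ᵥ Matrix.vecMul y B| ≤ Real.sqrt (frobSq A) * Real.sqrt (frobSq B) := by
  have hA := vecMul_sq_aux x hx A
  have hB := vecMul_sq_aux y hy B
  have hA0 : 0 ≤ frobSq A := le_trans (Finset.sum_nonneg fun i _ => sq_nonneg _) hA
  rw [← Real.sqrt_mul hA0]
  apply Real.abs_le_sqrt
  calc _ ≤ _ := Finset.sum_mul_sq_le_sq_mul_sq Finset.univ _ _
    _ ≤ _ := mul_le_mul hA hB (Finset.sum_nonneg fun i _ => sq_nonneg _) hA0

/-- flattened parameter space -/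
abbrev WSp (d h : ℕ) (dk : Fin h → ℕ) := EuclideanSpace ℝ (Σ k : Fin h, Fin d × Fin (dk k))

/-- flattening -/
noncomputable def flat {d h : ℕ} {dk : Fin h → ℕ} (U : ∀ k : Fin h, Matrix (Fin d) (Fin (dk k)) ℝ) :
    WSp d h dk := WithLp.toLp 2 fun p => U p.1 p.2.1 p.2.2

theorem norm_flat {d h : ℕ} {dk : Fin h → ℕ} (U : ∀ k : Fin h, Matrix (Fin d) (Fin (dk k)) ℝ) :
    ‖flat U‖ = Real.sqrt (∑ k, frobSq (U k)) := by
  rw [EuclideanSpace.norm_eq]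
  congr 1
  simp [flat, frobSq, Fintype.sum_sigma, Fintype.sum_prod_type]

theorem dist_flat {d h : ℕ} {dk : Fin h → ℕ} (U U' : ∀ k : Fin h, Matrix (Fin d) (Fin (dk k)) ℝ) :
    dist (flat U) (flat U') = ‖flat (fun k => U k - U' k)‖ := by
  rw [dist_eq_norm]; rfl

theorem frob_le_flat {d h : ℕ} {dk : Fin h → ℕ} (U : ∀ k : Fin h, Matrix (Fin d) (Fin (dk k)) ℝ)
    (k : Fin h) : Real.sqrt (frobSq (U k)) ≤ ‖flat U‖ := by
  rw [norm_flat]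
  apply Real.sqrt_le_sqrt
  exact Finset.single_le_sum (f := fun k => frobSq (U k)) (fun i _ => Finset.sum_nonneg fun _ _ =>
    Finset.sum_nonneg fun _ _ => sq_nonneg _) (Finset.mem_univ k)

theorem lip_aux {d h : ℕ} {dk : Fin h → ℕ} (x y : Fin d → ℝ)
    (hx : Real.sqrt (∑ r, x r ^ 2) ≤ 1) (hy : Real.sqrt (∑ r, y r ^ 2) ≤ 1)
    (U V U' V' : ∀ k : Fin h, Matrix (Fin d) (Fin (dk k)) ℝ)
    (hV : ‖flat V‖ ≤ 1) (hU' : ‖flat U'‖ ≤ 1) (k : Fin h) :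
    |Matrix.vecMul x (U k) ⬝ᵥ Matrix.vecMul y (V k) -
      Matrix.vecMul x (U' k) ⬝ᵥ Matrix.vecMul y (V' k)| ≤
      dist (flat U) (flat U') + dist (flat V) (flat V') := by
  have e : Matrix.vecMul x (U k) ⬝ᵥ Matrix.vecMul y (V k) -
      Matrix.vecMul x (U' k) ⬝ᵥ Matrix.vecMul y (V' k) =
      Matrix.vecMul x (U k - U' k) ⬝ᵥ Matrix.vecMul y (V k) +
      Matrix.vecMul x (U' k) ⬝ᵥ Matrix.vecMul y (V k - V' k) := by
    simp only [Matrix.vecMul_sub, sub_dotProduct, dotProduct_sub]; ring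
  rw [e, dist_flat, dist_flat]
  refine (abs_add_le _ _).trans (add_le_add ?_ ?_)
  · refine (score_aux x y hx hy _ _).trans ?_
    have h1 := frob_le_flat (fun k => U k - U' k) k
    have h2 := (frob_le_flat V k).trans hV
    exact (mul_le_of_le_one_right (Real.sqrt_nonneg _) h2).trans h1
  · refine (score_aux x y hx hy _ _).trans ?_
    have h1 := frob_le_flat (fun k => V k - V' k) k
    have h2 := (frob_le_flat U' k).trans hU'
    exact (mul_le_of_le_one_left (Real.sqrt_nonneg _) h2).trans h1

theorem sep_aux {m d h : ℕ} {dk : Fin h → ℕ} (x : Fin m → Fin d → ℝ)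
    (hx : ∀ v, Real.sqrt (∑ r, x v r ^ 2) ≤ 1) (γ : ℝ)
    (U V U' V' : ∀ k : Fin h, Matrix (Fin d) (Fin (dk k)) ℝ) (τ τ' : ℝ)
    (hV : ‖flat V‖ ≤ 1) (hU' : ‖flat U'‖ ≤ 1)
    (E E' : Finset (Fin m × Fin m)) (hE : ∀ e ∈ E, e.1 ≠ e.2)
    (hR : Recovers x U V τ γ E) (hR' : Recovers x U' V' τ' γ E') (e : Fin m × Fin m)
    (he : e ∈ E) (he' : e ∉ E') :
    2 * γ / 3 ≤ dist ((flat U, flat V, τ) : WSp d h dk × WSp d h dk × ℝ)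
      (flat U', flat V', τ') := by
  obtain ⟨k, hk⟩ := hR.1 e he
  have hk' := hR'.2 e.1 e.2 (hE e he) he' k
  have hl := (le_abs_self _).trans
    (lip_aux (x e.1) (x e.2) (hx _) (hx _) U V U' V' hV hU' k)
  rw [Prod.dist_eq, Prod.dist_eq]
  set a := dist (flat U) (flat U')
  set b := dist (flat V) (flat V')
  have hc : τ' - τ ≤ dist τ τ' := by rw [dist_comm, Real.dist_eq]; exact le_abs_self _
  have i1 : a ≤ max a (max b (dist τ τ')) := le_max_left _ _
  have i2 : b ≤ max a (max b (dist τ τ')) := (le_max_left _ _).trans (le_max_right _ _)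
  have i3 : dist τ τ' ≤ max a (max b (dist τ τ')) := (le_max_right _ _).trans (le_max_right _ _)
  show 2 * γ / 3 ≤ max a (max b (dist τ τ'))
  linarith

/-- **Margin-counting step of the description-length lower bound.**
There is an absolute `C' > 0` such that for any `γ ∈ (0,1)`, `m ≥ 2`, `d ≥ 1`, `h ≥ 1`,
head widths `dk` with `D_K = Σ_k dk k`, and unit-norm embeddings `x_v`, the number of
loop-free edge sets recoverable with margin `γ` using parameters with `‖U‖_F ≤ 1`,
`‖V‖_F ≤ 1`, `|τ| ≤ 1` is at most `(C'/γ)^(2·d·D_K + 1)`. -/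
theorem stmt_12 :
    ∃ C' > (0 : ℝ), ∀ γ : ℝ, 0 < γ → γ < 1 →
      ∀ m d h : ℕ, 2 ≤ m → 1 ≤ d → 1 ≤ h → ∀ dk : Fin h → ℕ,
      ∀ x : Fin m → Fin d → ℝ, (∀ v, Real.sqrt (∑ r, x v r ^ 2) ≤ 1) →
      ({E : Finset (Fin m × Fin m) | (∀ e ∈ E, e.1 ≠ e.2) ∧
          ∃ (U V : ∀ k : Fin h, Matrix (Fin d) (Fin (dk k)) ℝ) (τ : ℝ),
            Real.sqrt (∑ k, frobSq (U k)) ≤ 1 ∧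
            Real.sqrt (∑ k, frobSq (V k)) ≤ 1 ∧
            |τ| ≤ 1 ∧ Recovers x U V τ γ E}.ncard : ℝ)
        ≤ (C' / γ) ^ (2 * d * (∑ k, dk k) + 1) := by
  refine ⟨4, by norm_num, ?_⟩
  intro γ h0 h1 m d h _ _ _ dk x hx
  classical
  set S := {E : Finset (Fin m × Fin m) | (∀ e ∈ E, e.1 ≠ e.2) ∧
          ∃ (U V : ∀ k : Fin h, Matrix (Fin d) (Fin (dk k)) ℝ) (τ : ℝ),
            Real.sqrt (∑ k, frobSq (U k)) ≤ 1 ∧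
            Real.sqrt (∑ k, frobSq (V k)) ≤ 1 ∧
            |τ| ≤ 1 ∧ Recovers x U V τ γ E} with hS
  have key : ∀ E : Finset (Fin m × Fin m), ∃ (U V : ∀ k : Fin h, Matrix (Fin d) (Fin (dk k)) ℝ)
      (τ : ℝ), E ∈ S → ‖flat U‖ ≤ 1 ∧ ‖flat V‖ ≤ 1 ∧ |τ| ≤ 1 ∧ Recovers x U V τ γ E := by
    intro E
    by_cases hE : E ∈ S
    · obtain ⟨_, U, V, τ, a, b, c, e⟩ := hE
      exact ⟨U, V, τ, fun _ => ⟨by rwa [norm_flat], by rwa [norm_flat], c, e⟩⟩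
    · exact ⟨fun _ => 0, fun _ => 0, 0, fun h => absurd h hE⟩
  choose U V τ H using key
  have hfin : S.Finite := Set.toFinite S
  rw [Set.ncard_eq_toFinset_card S hfin]
  have hdim : Module.finrank ℝ (WSp d h dk × WSp d h dk × ℝ) = 2 * d * (∑ k, dk k) + 1 := by
    simp only [Module.finrank_prod, finrank_euclideanSpace, Fintype.card_sigma, Fintype.card_prod,
      Fintype.card_fin, Module.finrank_self, ← Finset.mul_sum]
    ring
  rw [← hdim]
  refine packing_aux hfin.toFinset
    (fun E => ((flat (U E), flat (V E), τ E) : WSp d h dk × WSp d h dk × ℝ)) γ h0 h1 ?_ ?_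
  · intro E hE
    obtain ⟨a, b, c, _⟩ := H E (hfin.mem_toFinset.1 hE)
    rw [Prod.norm_def, Prod.norm_def]
    exact max_le a (max_le b c)
  · intro E hE E' hE' hne
    have hE := hfin.mem_toFinset.1 hE
    have hE' := hfin.mem_toFinset.1 hE'
    obtain ⟨a, b, _, r⟩ := H E hE
    obtain ⟨a', b', _, r'⟩ := H E' hE'
    by_cases hsub : E ⊆ E'
    · have : ¬ E' ⊆ E := fun h => hne (Finset.Subset.antisymm hsub h)
      obtain ⟨e, he, he'⟩ := Finset.not_subset.1 this
      rw [dist_comm]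
      exact sep_aux x hx γ _ _ _ _ _ _ b' a E' E hE'.1 r' r e he he'
    · obtain ⟨e, he, he'⟩ := Finset.not_subset.1 hsub
      exact sep_aux x hx γ _ _ _ _ _ _ b a' E E' hE.1 r r' e he he'
end

section
/- For every γ ∈ (0,1) there exist a constant c'(γ) > 0 and an integer m₀(γ) such that for all m ≥ m₀: if there exist embeddings x_1,…,x_m ∈ ℝ^d with ‖x_v‖₂ ≤ 1 and, for every directed loop-free graph on {1,…,m} with exactly m edges, parameters U = [U_1|…|U_h], V = [V_1|…|V_h] with ‖U‖_F ≤ 1, ‖V‖_F ≤ 1, τ ∈ [−1,1], and total key dimension D_K = Σ_k d_k recovering that graph with margin γ (edges score at least τ + γ and ordered non-edges at most τ − γ under S(u,v) = max_k x_uᵀ U_k V_kᵀ x_v), then D_K ≥ c'(γ)·(m·log m)/d. -/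
open Matrix

theorem aux_score {d n : ℕ} (x y : Fin d → ℝ) (A B : Matrix (Fin d) (Fin n) ℝ) (s t : ℝ)
    (hs : 0 ≤ s) (ht : 0 ≤ t) (hx : ∑ r, x r ^ 2 ≤ 1) (hy : ∑ r, y r ^ 2 ≤ 1)
    (hA : frobSq A ≤ s ^ 2) (hB : frobSq B ≤ t ^ 2) :
    Matrix.vecMul x A ⬝ᵥ Matrix.vecMul y B ≤ s * t := by
  have key : ∀ (x : Fin d → ℝ) (A : Matrix (Fin d) (Fin n) ℝ), ∑ r, x r ^ 2 ≤ 1 →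
      ∑ j, (Matrix.vecMul x A j) ^ 2 ≤ frobSq A := by
    intro x A hx
    unfold frobSq
    rw [Finset.sum_comm]
    refine Finset.sum_le_sum fun j _ => ?_
    have h1 := Finset.sum_mul_sq_le_sq_mul_sq Finset.univ x (fun r => A r j)
    have h2 : 0 ≤ ∑ r, A r j ^ 2 := Finset.sum_nonneg fun _ _ => sq_nonneg _
    simp only [Matrix.vecMul, dotProduct]
    nlinarith
  have h1 := Finset.sum_mul_sq_le_sq_mul_sq Finset.univ (Matrix.vecMul x A) (Matrix.vecMul y B)
  have h2 := (key x A hx).trans hA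
  have h3 := (key y B hy).trans hB
  have h4 : 0 ≤ ∑ j, (Matrix.vecMul y B j) ^ 2 := Finset.sum_nonneg fun _ _ => sq_nonneg _
  have h5 : (∑ j, Matrix.vecMul x A j * Matrix.vecMul y B j) ^ 2 ≤ (s * t) ^ 2 := by
    rw [mul_pow]
    exact h1.trans (mul_le_mul h2 h3 h4 (sq_nonneg _))
  exact abs_le_of_sq_le_sq' h5 (mul_nonneg hs ht) |>.2

open MeasureTheory in
theorem aux_pack {E : Type*} [NormedAddCommGroup E] [NormedSpace ℝ E] [FiniteDimensional ℝ E]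
    {ι : Type*} [Fintype ι] (p : ι → E) (δ : ℝ) (hδ : 0 < δ) (hp : ∀ i, ‖p i‖ ≤ 1)
    (hsep : ∀ i j, i ≠ j → 2 * δ ≤ ‖p i - p j‖) :
    (Fintype.card ι : ℝ) ≤ ((1 + δ) / δ) ^ Module.finrank ℝ E := by
  borelize E
  let μ : Measure E := Measure.addHaar
  have D : Pairwise (Function.onFun Disjoint fun i => Metric.ball (p i) δ) := by
    intro i j hij
    apply Metric.ball_disjoint_ball
    rw [dist_eq_norm]
    linarith [hsep i j hij]
  have sub : (⋃ i, Metric.ball (p i) δ) ⊆ Metric.ball (0 : E) (1 + δ) := by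
    refine Set.iUnion_subset fun i => Metric.ball_subset_ball' ?_
    rw [dist_zero_right]
    linarith [hp i]
  have h := measure_mono (μ := μ) sub
  rw [measure_iUnion D (fun i => measurableSet_ball), tsum_fintype] at h
  simp only [μ, Measure.addHaar_ball_of_pos _ _ hδ,
    Measure.addHaar_ball_of_pos _ _ (show 0 < 1 + δ by linarith)] at h
  rw [Finset.sum_const, nsmul_eq_mul, ← mul_assoc] at h
  have h2 := (ENNReal.mul_le_mul_iff_left (Metric.measure_ball_pos _ _ zero_lt_one).ne'
    measure_ball_lt_top.ne).1 h
  have h3 := ENNReal.toReal_mono ENNReal.ofReal_ne_top h2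
  rw [ENNReal.toReal_mul, ENNReal.toReal_ofReal (by positivity),
    ENNReal.toReal_ofReal (by positivity)] at h3
  rw [div_pow, le_div_iff₀ (by positivity)]
  simpa using h3

/-- Flatten a family of matrices. -/
noncomputable def auxFlat {d h : ℕ} {dk : Fin h → ℕ}
    (U : ∀ k : Fin h, Matrix (Fin d) (Fin (dk k)) ℝ) :
    EuclideanSpace ℝ (Σ k : Fin h, Fin d × Fin (dk k)) :=
  WithLp.toLp 2 fun i => U i.1 i.2.1 i.2.2

theorem auxFlat_sub {d h : ℕ} {dk : Fin h → ℕ}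
    (U U' : ∀ k : Fin h, Matrix (Fin d) (Fin (dk k)) ℝ) :
    auxFlat U - auxFlat U' = auxFlat (fun k => U k - U' k) := by
  ext i
  simp [auxFlat]

theorem auxFlat_norm {d h : ℕ} {dk : Fin h → ℕ}
    (U : ∀ k : Fin h, Matrix (Fin d) (Fin (dk k)) ℝ) :
    ‖auxFlat U‖ = Real.sqrt (∑ k, frobSq (U k)) := by
  rw [EuclideanSpace.norm_eq]
  congr 1
  rw [Fintype.sum_sigma]
  refine Finset.sum_congr rfl fun k _ => ?_
  rw [Fintype.sum_prod_type]
  simp [auxFlat, frobSq]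

theorem auxFlat_frob {d h : ℕ} {dk : Fin h → ℕ}
    (U : ∀ k : Fin h, Matrix (Fin d) (Fin (dk k)) ℝ) (k : Fin h) :
    frobSq (U k) ≤ ‖auxFlat U‖ ^ 2 := by
  have hn : ∀ k, 0 ≤ frobSq (U k) := fun k =>
    Finset.sum_nonneg fun _ _ => Finset.sum_nonneg fun _ _ => sq_nonneg _
  rw [auxFlat_norm, Real.sq_sqrt (Finset.sum_nonneg fun k _ => hn k)]
  exact Finset.single_le_sum (f := fun k => frobSq (U k)) (fun k _ => hn k) (Finset.mem_univ k)

theorem aux_count (γ : ℝ) (hγ0 : 0 < γ) (m d h : ℕ) (dk : Fin h → ℕ)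
    (x : Fin m → Fin d → ℝ) (hx : ∀ v, Real.sqrt (∑ r, x v r ^ 2) ≤ 1)
    (H : ∀ E : Finset (Fin m × Fin m), (∀ e ∈ E, e.1 ≠ e.2) → E.card = m →
        ∃ (U V : ∀ k : Fin h, Matrix (Fin d) (Fin (dk k)) ℝ) (τ : ℝ),
          Real.sqrt (∑ k, frobSq (U k)) ≤ 1 ∧
          Real.sqrt (∑ k, frobSq (V k)) ≤ 1 ∧
          |τ| ≤ 1 ∧ Recovers x U V τ γ E) :
    (((m - 1 : ℕ) : ℝ)) ^ m ≤ ((1 + γ / 3) / (γ / 3)) ^ (2 * (d * ∑ k, dk k) + 1) := by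
  classical
  have hx' : ∀ v, ∑ r, x v r ^ 2 ≤ 1 := fun v => by
    have := hx v
    rwa [Real.sqrt_le_iff, one_pow, and_iff_right zero_le_one] at this
  let F := (v : Fin m) → {w : Fin m // w ≠ v}
  let G : F → Finset (Fin m × Fin m) := fun f => Finset.univ.image fun v => (v, (f v : Fin m))
  have hG : ∀ (f : F) u v, (u, v) ∈ G f ↔ (f u : Fin m) = v := by
    intro f u v
    simp [G]
  have H' : ∀ f : F, ∃ (U V : ∀ k : Fin h, Matrix (Fin d) (Fin (dk k)) ℝ) (τ : ℝ),
          Real.sqrt (∑ k, frobSq (U k)) ≤ 1 ∧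
          Real.sqrt (∑ k, frobSq (V k)) ≤ 1 ∧
          |τ| ≤ 1 ∧ Recovers x U V τ γ (G f) := by
    intro f
    apply H
    · rintro ⟨u, v⟩ he
      rw [hG] at he
      intro h
      exact (f u).2 (he.trans h.symm)
    · rw [Finset.card_image_of_injective _ (fun a b hab => (Prod.ext_iff.1 hab).1)]
      simp
  choose U V τ hU hV hτ hR using H'
  let p : F → EuclideanSpace ℝ (Σ k : Fin h, Fin d × Fin (dk k)) ×
      EuclideanSpace ℝ (Σ k : Fin h, Fin d × Fin (dk k)) × ℝ :=
    fun f => (auxFlat (U f), auxFlat (V f), τ f)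
  have hp := aux_pack p (γ / 3) (by positivity) (by
    intro f
    simp only [p, Prod.norm_mk, auxFlat_norm, Real.norm_eq_abs]
    exact max_le (hU f) (max_le (hV f) (hτ f))) (by
    intro f g hfg
    obtain ⟨u, hu⟩ := Function.ne_iff.1 hfg
    obtain ⟨k, hk⟩ := (hR f).1 (u, (f u : Fin m)) ((hG _ _ _).2 rfl)
    have hk' := (hR g).2 u (f u) (f u).2.symm
      (by rw [hG]; intro h; exact hu (Subtype.ext h.symm)) k
    have e1 : ‖auxFlat (U f) - auxFlat (U g)‖ ≤ ‖p f - p g‖ := norm_fst_le (p f - p g)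
    have e2 : ‖auxFlat (V f) - auxFlat (V g)‖ ≤ ‖p f - p g‖ :=
      (norm_fst_le (p f - p g).2).trans (norm_snd_le (p f - p g))
    have e3 : |τ f - τ g| ≤ ‖p f - p g‖ :=
      (norm_snd_le (p f - p g).2).trans (norm_snd_le (p f - p g))
    rw [auxFlat_sub] at e1 e2
    have s1 := aux_score (x u) (x (f u)) (U f k - U g k) (V f k) _ _ (norm_nonneg _)
      (norm_nonneg _) (hx' _) (hx' _) (auxFlat_frob (fun k => U f k - U g k) k)
      (auxFlat_frob (V f) k)
    have s2 := aux_score (x u) (x (f u)) (U g k) (V f k - V g k) _ _ (norm_nonneg _)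
      (norm_nonneg _) (hx' _) (hx' _) (auxFlat_frob (U g) k)
      (auxFlat_frob (fun k => V f k - V g k) k)
    rw [Matrix.vecMul_sub, sub_dotProduct] at s1
    rw [Matrix.vecMul_sub, dotProduct_sub] at s2
    have n1 : ‖auxFlat (V f)‖ ≤ 1 := (auxFlat_norm _).trans_le (hV f)
    have n2 : ‖auxFlat (U g)‖ ≤ 1 := (auxFlat_norm _).trans_le (hU g)
    have t1 := mul_le_of_le_one_right (norm_nonneg (auxFlat fun k => U f k - U g k)) n1
    have t2 := mul_le_of_le_one_left (norm_nonneg (auxFlat fun k => V f k - V g k)) n2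
    have t3 := neg_abs_le (τ f - τ g)
    simp only at hk
    linarith)
  have c1 : Fintype.card F = (m - 1) ^ m := by
    simp [F, Fintype.card_subtype_compl]
  have c2 : Module.finrank ℝ (EuclideanSpace ℝ (Σ k : Fin h, Fin d × Fin (dk k)) ×
      EuclideanSpace ℝ (Σ k : Fin h, Fin d × Fin (dk k)) × ℝ) = 2 * (d * ∑ k, dk k) + 1 := by
    simp [Module.finrank_prod, Fintype.card_sigma, ← Finset.mul_sum]
    ring
  rw [c1, c2] at hp
  exact_mod_cast hp

theorem stmt_14 (γ : ℝ) (hγ0 : 0 < γ) (hγ1 : γ < 1) :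
    ∃ c' > (0 : ℝ), ∃ m₀ : ℕ, ∀ m : ℕ, m₀ ≤ m →
      ∀ d h : ℕ, 1 ≤ d → ∀ dk : Fin h → ℕ,
      ∀ x : Fin m → Fin d → ℝ, (∀ v, Real.sqrt (∑ r, x v r ^ 2) ≤ 1) →
      (∀ E : Finset (Fin m × Fin m), (∀ e ∈ E, e.1 ≠ e.2) → E.card = m →
        ∃ (U V : ∀ k : Fin h, Matrix (Fin d) (Fin (dk k)) ℝ) (τ : ℝ),
          Real.sqrt (∑ k, frobSq (U k)) ≤ 1 ∧
          Real.sqrt (∑ k, frobSq (V k)) ≤ 1 ∧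
          |τ| ≤ 1 ∧ Recovers x U V τ γ E) →
      c' * (m * Real.log m) / d ≤ ((∑ k, dk k : ℕ) : ℝ) := by
  set K : ℝ := (1 + γ / 3) / (γ / 3) with hK
  have hK1 : 1 < K := by
    rw [hK, one_lt_div (by positivity)]
    linarith
  have hL : 0 < Real.log K := Real.log_pos hK1
  refine ⟨1 / (6 * Real.log K), by positivity, max 4 (⌈Real.log K⌉₊ + 1), ?_⟩
  intro m hm d h hd dk x hx H
  have hm4 : 4 ≤ m := (le_max_left _ _).trans hm
  have hmL : Real.log K < m := by
    have h1 : ⌈Real.log K⌉₊ + 1 ≤ m := (le_max_right _ _).trans hm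
    exact (Nat.le_ceil _).trans_lt (by exact_mod_cast h1)
  have hc := aux_count γ hγ0 m d h dk x hx H
  rw [← hK] at hc
  set D := ∑ k, dk k with hD
  have hm4' : (4 : ℝ) ≤ m := by exact_mod_cast hm4
  have hmc : ((m - 1 : ℕ) : ℝ) = (m : ℝ) - 1 := by
    rw [Nat.cast_sub (by omega)]; simp
  rw [hmc] at hc
  have hlog := Real.log_le_log (pow_pos (by linarith) _) hc
  rw [Real.log_pow, Real.log_pow] at hlog
  have hone : 1 ≤ Real.log ((m : ℝ) - 1) := by
    rw [Real.le_log_iff_exp_le (by linarith)]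
    linarith [Real.exp_one_lt_d9]
  have hhalf : Real.log m ≤ 2 * Real.log ((m : ℝ) - 1) := by
    have : Real.log m ≤ Real.log (((m : ℝ) - 1) ^ 2) :=
      Real.log_le_log (by linarith) (by nlinarith)
    rwa [Real.log_pow] at this
  have hdD : 1 ≤ d * D := by
    by_contra hcon
    have h0 : d * D = 0 := by omega
    rw [h0] at hlog
    push_cast at hlog
    nlinarith
  have hdD' : (1 : ℝ) ≤ (d : ℝ) * D := by exact_mod_cast hdD
  have hd' : (0 : ℝ) < d := by exact_mod_cast hd
  push_cast at hlog
  have h1 : (m : ℝ) * Real.log m ≤ 2 * (m * Real.log ((m : ℝ) - 1)) := by nlinarith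
  have h2 : (2 * ((d : ℝ) * D) + 1) * Real.log K ≤ 3 * (d * D) * Real.log K :=
    mul_le_mul_of_nonneg_right (by linarith) hL.le
  rw [div_le_iff₀ hd', one_div, inv_mul_le_iff₀ (by positivity)]
  have hlog' : (m : ℝ) * Real.log ((m : ℝ) - 1) ≤ (2 * ((d : ℝ) * D) + 1) * Real.log K := by
    simpa [hD] using hlog
  linarith
end
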